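/- The normalization function normE is a valid normalization function for ≈ on Exp: for every t : Exp, normE t ≈ t, and for all t u : Exp, t ≈ u implies normE t = normE u. -/

import Mathlib

/-- Arithmetic expressions. -/
inductive Exp : Type
  | Zero : Exp
  | One : Exp
  | Opp : Exp → Exp
  | Plus : Exp → Exp → Exp
deriving DecidableEq

/-- The smallest equivalence relation on `Exp` compatible with `Opp` and `Plus` such
that `Zero` is neutral for `Plus`. -/
inductive expEq : Exp → Exp → Prop
  | plusZero (t : Exp) : expEq (Exp.Plus t Exp.Zero) t
  | zeroPlus (t : Exp) : expEq (Exp.Plus Exp.Zero t) t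
  | refl (t : Exp) : expEq t t
  | symm {t u : Exp} : expEq t u → expEq u t
  | trans {t u v : Exp} : expEq t u → expEq u v → expEq t v
  | opp {t t' : Exp} : expEq t t' → expEq (Exp.Opp t) (Exp.Opp t')
  | plus {t t' u u' : Exp} : expEq t t' → expEq u u' →
      expEq (Exp.Plus t u) (Exp.Plus t' u')

/-- The construction function for `Plus`. -/
def plusC : Exp → Exp → Exp
  | Exp.Zero, u => u
  | t, Exp.Zero => t
  | t, u => Exp.Plus t u

/-- The normalization function associated to the construction functions. -/
def normE : Exp → Exp
  | Exp.Zero => Exp.Zero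
  | Exp.One => Exp.One
  | Exp.Opp t => Exp.Opp (normE t)
  | Exp.Plus t u => plusC (normE t) (normE u)

theorem plusC_expEq (t u : Exp) : expEq (plusC t u) (Exp.Plus t u) := by
  cases t <;> cases u <;> simp only [plusC] <;>
    first
    | exact expEq.refl _
    | exact expEq.symm (expEq.zeroPlus _)
    | exact expEq.symm (expEq.plusZero _)

theorem plusC_zero (t : Exp) : plusC t Exp.Zero = t := by
  cases t <;> rfl

theorem normE_valid :
    (∀ t, expEq (normE t) t) ∧ (∀ t u, expEq t u → normE t = normE u) := by
  refine ⟨fun t => ?_, fun t u h => ?_⟩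
  · induction t with
    | Zero => exact expEq.refl _
    | One => exact expEq.refl _
    | Opp t ih => exact expEq.opp ih
    | Plus t u iht ihu => exact expEq.trans (plusC_expEq _ _) (expEq.plus iht ihu)
  · induction h with
    | plusZero t => exact plusC_zero _
    | zeroPlus t => simp only [normE, plusC]
    | refl t => rfl
    | symm _ ih => exact ih.symm
    | trans _ _ ih1 ih2 => exact ih1.trans ih2
    | opp _ ih => simp only [normE, ih]
    | plus _ _ ih1 ih2 => simp only [normE, ih1, ih2]
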